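/- There exists no finite set X of syllogistic rules in the fragment R† such that the indirect derivation relation ⊩_X is both sound and complete for R†. -/

import Mathlib

/-!
The proof exhibits, for every bound on the number of antecedents of a rule, an unsatisfiable set
`Lim N` of `R†`-formulas which is complete (it contains each `R†`-formula or its negation) and all
of whose small subsets are satisfiable. Such a set is closed under every sound rule with few
antecedents: if it contained the antecedents but not the consequent, then it would contain the
negated consequent, and the antecedents with the negated consequent would form a small
unsatisfiable subset. Completeness makes *reductio* harmless as well, so no absurdity is derivable
from `Lim N` (`limAll_of_derives`), although `Lim N` entails all of them.

The set arises from a chain of unary predicates `A_j, B_j, C_j` for `j ≤ N`, subject to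
`A_j ⊆ ∃(A_{j+1}, r)`, to the requirement that all `r`-successors of points in `B_j` lie in
`B_{j+1}`, and to the same requirement for `C`. Hence `A_j ∩ B_j ∩ C_j ≠ ∅` propagates upwards.
It holds at `j = 0`, where `A_0` is nonempty and contained in `B_0` and `C_0`, and it fails at
`j = N`, where `B_N` and `C_N` are disjoint (`lim_unsat`).

For `1 ≤ i ≤ N - 2` the structure `chain N i` realises `A_j ∩ B_j ∩ C_j` exactly for `j ≤ i`. At
level `i` the points of this triple intersection have an `r`-successor in `B_{i+1} ∩ C_{i+1}` but
none in `A_{i+1}`. A formula of `R†` tests either two literals at one point, or one literal at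
each end of an edge, and so it cannot detect a triple intersection: a witness inside one can be
replaced by a witness outside. The only
exception is `∃(A_i, ∀(A_{i+1}, r̄))`, which holds in `chain N i` alone (`witness`). Thus every
`R†`-formula has the same truth value in all these structures but at most one (`const_sat`).
The set `Lim N` collects the formulas true in all but at most one of them; it is complete, and
fewer formulas than there are structures hold together in one of the structures (`common_index`).
-/

/-!
Syllogistic logics (Pratt-Hartmann & Moss, "Logics for the Relational Syllogistic").

Unary atoms and binary atoms are encoded by `ℕ` (two disjoint copies).
-/

namespace Syllogistic

/-- Unary literals: a unary atom `p` or its negation `p̄`. -/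
inductive Lit : Type
  | pos : ℕ → Lit
  | neg : ℕ → Lit
deriving DecidableEq

/-- Binary literals: a binary atom `r` or its negation `r̄`. -/
inductive BLit : Type
  | pos : ℕ → BLit
  | neg : ℕ → BLit
deriving DecidableEq

/-- Bar (negation) on unary literals. -/
def Lit.bar : Lit → Lit
  | .pos p => .neg p
  | .neg p => .pos p

/-- Bar (negation) on binary literals. -/
def BLit.bar : BLit → BLit
  | .pos r => .neg r
  | .neg r => .pos r

/-- A unary literal is positive if it is an atom. -/
def Lit.isPos : Lit → Prop
  | .pos _ => True
  | .neg _ => False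

/-- A binary literal is positive if it is an atom. -/
def BLit.isPos : BLit → Prop
  | .pos _ => True
  | .neg _ => False

/-- e-terms: a unary literal `l`, or `∃(l,t)`, or `∀(l,t)`. -/
inductive ETerm : Type
  | lit : Lit → ETerm
  | ex : Lit → BLit → ETerm
  | al : Lit → BLit → ETerm
deriving DecidableEq

/-- The e-term consisting of a single positive unary atom. -/
def atomE (p : ℕ) : ETerm := .lit (.pos p)

/-- Bar on e-terms: `∀(l,t)‾ = ∃(l,t̄)` and `∃(l,t)‾ = ∀(l,t̄)`. -/
def ETerm.bar : ETerm → ETerm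
  | .lit l => .lit l.bar
  | .ex l t => .al l t.bar
  | .al l t => .ex l t.bar

/-- c-terms: a unary literal, or `∃(p,t)`/`∀(p,t)` with `p` a unary atom. -/
def ETerm.isC : ETerm → Prop
  | .lit _ => True
  | .ex l _ => l.isPos
  | .al l _ => l.isPos

/-- Positive c-terms: the literals occurring in them are positive. -/
def ETerm.isPosC : ETerm → Prop
  | .lit l => l.isPos
  | .ex l t => l.isPos ∧ t.isPos
  | .al l t => l.isPos ∧ t.isPos

/-- R*†-formulas: `∃(e,f)` or `∀(e,f)` for e-terms `e`, `f`. -/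
inductive Formula : Type
  | ex : ETerm → ETerm → Formula
  | al : ETerm → ETerm → Formula
deriving DecidableEq

/-- Negation of a formula: `∀(e,f)‾ = ∃(e,f̄)`, `∃(e,f)‾ = ∀(e,f̄)`. -/
def Formula.bar : Formula → Formula
  | .ex e f => .al e f.bar
  | .al e f => .ex e f.bar

/-- The silent identification: `∃(e,f)` with `∃(f,e)`, and `∀(e,f)` with `∀(f̄,ē)`. -/
def Formula.swap : Formula → Formula
  | .ex e f => .ex f e
  | .al e f => .al f.bar e.bar

/-- Two formulas are identified if they are equal or are swaps of each other. -/
def FormEquiv (φ ψ : Formula) : Prop := ψ = φ ∨ ψ = φ.swap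

/-- An absurdity is a formula of the form `∃(e,ē)`. -/
def IsAbsurd (φ : Formula) : Prop := ∃ e : ETerm, φ = .ex e e.bar

/-- A substitution maps unary atoms to unary atoms and binary atoms to binary atoms. -/
structure Subst where
  u : ℕ → ℕ
  b : ℕ → ℕ

def Lit.subst (g : Subst) : Lit → Lit
  | .pos p => .pos (g.u p)
  | .neg p => .neg (g.u p)

def BLit.subst (g : Subst) : BLit → BLit
  | .pos r => .pos (g.b r)
  | .neg r => .neg (g.b r)

def ETerm.subst (g : Subst) : ETerm → ETerm
  | .lit l => .lit (l.subst g)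
  | .ex l t => .ex (l.subst g) (t.subst g)
  | .al l t => .al (l.subst g) (t.subst g)

/-- Atom-wise application of a substitution to a formula. -/
def Formula.subst (g : Subst) : Formula → Formula
  | .ex e f => .ex (e.subst g) (f.subst g)
  | .al e f => .al (e.subst g) (f.subst g)

/-- A structure over a domain `A`: an interpretation of every unary atom as a
subset of `A` and of every binary atom as a binary relation on `A`.
(Non-emptiness of the domain is imposed where structures are quantified over.) -/
structure Interp (A : Type) where
  up : ℕ → Set A
  br : ℕ → Set (A × A)

def Interp.litI {A : Type} (M : Interp A) : Lit → Set A
  | .pos p => M.up p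
  | .neg p => (M.up p)ᶜ

def Interp.blitI {A : Type} (M : Interp A) : BLit → Set (A × A)
  | .pos r => M.br r
  | .neg r => (M.br r)ᶜ

/-- Interpretation of e-terms. -/
def Interp.etermI {A : Type} (M : Interp A) : ETerm → Set A
  | .lit l => M.litI l
  | .ex l t => {a | ∃ b ∈ M.litI l, (a, b) ∈ M.blitI t}
  | .al l t => {a | ∀ b ∈ M.litI l, (a, b) ∈ M.blitI t}

/-- Truth of a formula in a structure. -/
def Interp.Sat {A : Type} (M : Interp A) : Formula → Prop
  | .al e f => M.etermI e ⊆ M.etermI f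
  | .ex e f => (M.etermI e ∩ M.etermI f).Nonempty

/-- Truth of a set of formulas in a structure. -/
def Interp.SatSet {A : Type} (M : Interp A) (Θ : Set Formula) : Prop :=
  ∀ θ ∈ Θ, M.Sat θ

/-- `Θ ⊨ θ`: every structure (with non-empty domain) satisfying `Θ` satisfies `θ`. -/
def Entails (Θ : Set Formula) (θ : Formula) : Prop :=
  ∀ (A : Type), Nonempty A → ∀ M : Interp A, M.SatSet Θ → M.Sat θ

/-- `Θ` is satisfied in some structure with non-empty domain. -/
def Satisfiable (Θ : Set Formula) : Prop :=
  ∃ (A : Type), Nonempty A ∧ ∃ M : Interp A, M.SatSet Θ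

/-- A syllogistic rule: a finite set of antecedents together with a consequent. -/
structure SylRule where
  ants : Finset Formula
  con : Formula

/-- A rule is sound if its antecedents entail its consequent. -/
def SylRule.Sound (R : SylRule) : Prop := Entails (↑R.ants) R.con

/-- A rule is a rule *in* the fragment `F` if all its formulas lie in `F`. -/
def RuleIn (F : Set Formula) (R : SylRule) : Prop :=
  (∀ ψ ∈ R.ants, ψ ∈ F) ∧ R.con ∈ F

/-- The instance of a rule under a substitution. -/
def SylRule.inst (g : Subst) (R : SylRule) : SylRule :=
  ⟨R.ants.image (Formula.subst g), R.con.subst g⟩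

/-- Two rules are the same modulo the identification of formulas. -/
def RuleEquiv (R R' : SylRule) : Prop :=
  (∀ ψ ∈ R.ants, ∃ ψ' ∈ R'.ants, FormEquiv ψ ψ') ∧
  (∀ ψ' ∈ R'.ants, ∃ ψ ∈ R.ants, FormEquiv ψ ψ') ∧
  FormEquiv R.con R'.con

/-- The direct derivation relation `⊢_X` determined by a set `X` of syllogistic
rules: premises may be used, and instances of rules applied; formulas are
treated up to the silent identification. -/
inductive Derives (X : Set SylRule) : Set Formula → Formula → Prop
  | mem {Θ : Set Formula} {θ : Formula} : θ ∈ Θ → Derives X Θ θ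
  | rule {Θ : Set Formula} (R : SylRule) (g : Subst) :
      R ∈ X → (∀ ψ ∈ R.ants, Derives X Θ (ψ.subst g)) →
      Derives X Θ (R.con.subst g)
  | ident {Θ : Set Formula} {φ ψ : Formula} :
      Derives X Θ φ → FormEquiv φ ψ → Derives X Θ ψ

/-- The indirect derivation relation `⊩_X`: as `⊢_X`, together with
*reductio ad absurdum*. -/
inductive IDerives (X : Set SylRule) : Set Formula → Formula → Prop
  | mem {Θ : Set Formula} {θ : Formula} : θ ∈ Θ → IDerives X Θ θ
  | rule {Θ : Set Formula} (R : SylRule) (g : Subst) :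
      R ∈ X → (∀ ψ ∈ R.ants, IDerives X Θ (ψ.subst g)) →
      IDerives X Θ (R.con.subst g)
  | ident {Θ : Set Formula} {φ ψ : Formula} :
      IDerives X Θ φ → FormEquiv φ ψ → IDerives X Θ ψ
  | raa {Θ : Set Formula} {θ b : Formula} :
      IsAbsurd b → IDerives X (Θ ∪ {θ.bar}) b → IDerives X Θ θ

/-- Soundness of a derivation relation for the fragment `F`. -/
def SoundFor (F : Set Formula) (D : Set Formula → Formula → Prop) : Prop :=
  ∀ (Θ : Set Formula) (θ : Formula), Θ ⊆ F → θ ∈ F → D Θ θ → Entails Θ θ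

/-- Completeness of a derivation relation for the fragment `F`. -/
def CompleteFor (F : Set Formula) (D : Set Formula → Formula → Prop) : Prop :=
  ∀ (Θ : Set Formula) (θ : Formula), Θ ⊆ F → θ ∈ F → Entails Θ θ → D Θ θ

/-- Refutation-completeness for the fragment `F`: every unsatisfiable set of
`F`-formulas derives some absurdity. -/
def RefutationCompleteFor (F : Set Formula) (D : Set Formula → Formula → Prop) : Prop :=
  ∀ Θ : Set Formula, Θ ⊆ F → ¬ Satisfiable Θ → ∃ b, IsAbsurd b ∧ D Θ b

/-- Consistency of a set of formulas with respect to `⊩_X`. -/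
def Consistent (X : Set SylRule) (Θ : Set Formula) : Prop :=
  ¬ ∃ b, IsAbsurd b ∧ IDerives X Θ b

/-! ### The six fragments -/

/-- The fragment `S`: `∃(p,l)`, `∃(l,p)`, `∀(p,l)`, `∀(l,p̄)`. -/
def FragS : Set Formula :=
  {φ | (∃ (p : ℕ) (l : Lit), φ = .ex (atomE p) (.lit l)) ∨
       (∃ (p : ℕ) (l : Lit), φ = .ex (.lit l) (atomE p)) ∨
       (∃ (p : ℕ) (l : Lit), φ = .al (atomE p) (.lit l)) ∨
       (∃ (p : ℕ) (l : Lit), φ = .al (.lit l) (.lit (.neg p)))}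

/-- The fragment `S†`: `∃(l,m)`, `∀(l,m)` for unary literals `l`, `m`. -/
def FragSdag : Set Formula :=
  {φ | ∃ l m : Lit, φ = .ex (.lit l) (.lit m) ∨ φ = .al (.lit l) (.lit m)}

/-- The fragment `R`: `∃(p,c)`, `∃(c,p)`, `∀(p,c)`, `∀(c,p̄)` for a c-term `c`. -/
def FragR : Set Formula :=
  {φ | ∃ (p : ℕ) (c : ETerm), c.isC ∧
       (φ = .ex (atomE p) c ∨ φ = .ex c (atomE p) ∨
        φ = .al (atomE p) c ∨ φ = .al c (.lit (.neg p)))}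

/-- The fragment `R†`: `∃(l,e)`, `∃(e,l)`, `∀(l,e)`, `∀(e,l)` for an e-term `e`. -/
def FragRdag : Set Formula :=
  {φ | ∃ (l : Lit) (e : ETerm),
       φ = .ex (.lit l) e ∨ φ = .ex e (.lit l) ∨
       φ = .al (.lit l) e ∨ φ = .al e (.lit l)}

/-- The fragment `R*`: `∃(c⁺,d)`, `∃(d,c⁺)`, `∀(c⁺,d)`, `∀(d,c⁺‾)` with `c⁺` a
positive c-term and `d` a c-term. -/
def FragRstar : Set Formula :=
  {φ | ∃ c d : ETerm, c.isPosC ∧ d.isC ∧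
       (φ = .ex c d ∨ φ = .ex d c ∨ φ = .al c d ∨ φ = .al d c.bar)}

/-- The fragment `R*†`: all formulas. -/
def FragRstardag : Set Formula := Set.univ

/-- The six syllogistic fragments. -/
def IsFragment (F : Set Formula) : Prop :=
  F = FragS ∨ F = FragSdag ∨ F = FragR ∨ F = FragRdag ∨ F = FragRstar ∨ F = FragRstardag

/-! ### Rule sets -/

/-- The rule set `S`: (D1), (D2), (D3), (B), (A), (T), (I), (X). -/
def RuleSetS : Set SylRule :=
  {R | (∃ (p q : ℕ) (l : Lit),
          R = ⟨{.al (atomE q) (.lit l), .ex (atomE p) (atomE q)}, .ex (atomE p) (.lit l)⟩) ∨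
       (∃ (p q : ℕ) (l : Lit),
          R = ⟨{.ex (atomE p) (.lit l), .al (atomE p) (atomE q)}, .ex (atomE q) (.lit l)⟩) ∨
       (∃ (p q : ℕ) (l : Lit),
          R = ⟨{.al (atomE q) (.lit l.bar), .ex (atomE p) (.lit l)}, .ex (atomE p) (.lit (.neg q))⟩) ∨
       (∃ (p q : ℕ) (l : Lit),
          R = ⟨{.al (atomE p) (atomE q), .al (atomE q) (.lit l)}, .al (atomE p) (.lit l)⟩) ∨
       (∃ (p : ℕ) (l : Lit),
          R = ⟨{.al (atomE p) (.lit (.neg p))}, .al (atomE p) (.lit l)⟩) ∨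
       (∃ p : ℕ, R = ⟨∅, .al (atomE p) (atomE p)⟩) ∨
       (∃ (p : ℕ) (l : Lit),
          R = ⟨{.ex (atomE p) (.lit l)}, .ex (atomE p) (atomE p)⟩) ∨
       (∃ φ ψ : Formula, φ ∈ FragS ∧ ψ ∈ FragS ∧ R = ⟨{ψ, ψ.bar}, φ⟩)}

/-- The rule set `S†`: (D), (B), (A), (T), (I), (N), (X). -/
def RuleSetSdag : Set SylRule :=
  {R | (∃ l m n : Lit,
          R = ⟨{.ex (.lit l) (.lit n), .al (.lit l) (.lit m)}, .ex (.lit m) (.lit n)⟩) ∨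
       (∃ l m n : Lit,
          R = ⟨{.al (.lit l) (.lit m), .al (.lit m) (.lit n)}, .al (.lit l) (.lit n)⟩) ∨
       (∃ l m : Lit, R = ⟨{.al (.lit l) (.lit l.bar)}, .al (.lit l) (.lit m)⟩) ∨
       (∃ l : Lit, R = ⟨∅, .al (.lit l) (.lit l)⟩) ∨
       (∃ l m : Lit, R = ⟨{.ex (.lit l) (.lit m)}, .ex (.lit l) (.lit l)⟩) ∨
       (∃ l : Lit, R = ⟨{.al (.lit l.bar) (.lit l)}, .ex (.lit l) (.lit l)⟩) ∨
       (∃ φ ψ : Formula, φ ∈ FragSdag ∧ ψ ∈ FragSdag ∧ R = ⟨{ψ, ψ.bar}, φ⟩)}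

/-- The rules (B), (T) and (A) of the rule set `S†`. -/
def RuleSetBTA : Set SylRule :=
  {R | (∃ l m n : Lit,
          R = ⟨{.al (.lit l) (.lit m), .al (.lit m) (.lit n)}, .al (.lit l) (.lit n)⟩) ∨
       (∃ l : Lit, R = ⟨∅, .al (.lit l) (.lit l)⟩) ∨
       (∃ l m : Lit, R = ⟨{.al (.lit l) (.lit l.bar)}, .al (.lit l) (.lit m)⟩)}

/-- The rule set `R`: (D1), (D2), (D3), (B), (T), (I), (A), (II), (∀∀), (∃∃), (∀∃). -/
def RuleSetR : Set SylRule :=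
  {R | (∃ (p q : ℕ) (c : ETerm), c.isC ∧
          R = ⟨{.ex (atomE p) (atomE q), .al (atomE q) c}, .ex (atomE p) c⟩) ∨
       (∃ (p q : ℕ) (c : ETerm), c.isC ∧
          R = ⟨{.al (atomE p) (atomE q), .ex (atomE p) c}, .ex (atomE q) c⟩) ∨
       (∃ (p q : ℕ) (c : ETerm), c.isC ∧
          R = ⟨{.al (atomE q) c.bar, .ex (atomE p) c}, .ex (atomE p) (.lit (.neg q))⟩) ∨
       (∃ (p q : ℕ) (c : ETerm), c.isC ∧
          R = ⟨{.al (atomE p) (atomE q), .al (atomE q) c}, .al (atomE p) c⟩) ∨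
       (∃ p : ℕ, R = ⟨∅, .al (atomE p) (atomE p)⟩) ∨
       (∃ (p : ℕ) (c : ETerm), c.isC ∧
          R = ⟨{.ex (atomE p) c}, .ex (atomE p) (atomE p)⟩) ∨
       (∃ (p : ℕ) (c : ETerm), c.isC ∧
          R = ⟨{.al (atomE p) (.lit (.neg p))}, .al (atomE p) c⟩) ∨
       (∃ (p q : ℕ) (t : BLit),
          R = ⟨{.ex (atomE p) (.ex (.pos q) t)}, .ex (atomE q) (atomE q)⟩) ∨
       (∃ (p q q' : ℕ) (t : BLit),
          R = ⟨{.al (atomE p) (.al (.pos q') t), .ex (atomE q) (atomE q')},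
               .al (atomE p) (.ex (.pos q) t)⟩) ∨
       (∃ (p q q' : ℕ) (t : BLit),
          R = ⟨{.ex (atomE p) (.ex (.pos q) t), .al (atomE q) (atomE q')},
               .ex (atomE p) (.ex (.pos q') t)⟩) ∨
       (∃ (p q q' : ℕ) (t : BLit),
          R = ⟨{.al (atomE p) (.ex (.pos q) t), .al (atomE q) (atomE q')},
               .al (atomE p) (.ex (.pos q') t)⟩)}

/-- The rule set `R*`: (T), (I), (B), (D1), (D2), (J), (K), (L), (II), (Z), (W). -/
def RuleSetRstar : Set SylRule :=
  {R | (∃ c : ETerm, c.isPosC ∧ R = ⟨∅, .al c c⟩) ∨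
       (∃ c d : ETerm, c.isPosC ∧ d.isC ∧ R = ⟨{.ex c d}, .ex c c⟩) ∨
       (∃ b c d : ETerm, b.isPosC ∧ c.isPosC ∧ d.isC ∧
          R = ⟨{.al b c, .al c d}, .al b d⟩) ∨
       (∃ b c d : ETerm, b.isPosC ∧ c.isPosC ∧ d.isC ∧
          R = ⟨{.ex b c, .al c d}, .ex b d⟩) ∨
       (∃ b c d : ETerm, b.isPosC ∧ c.isPosC ∧ d.isC ∧
          R = ⟨{.al b c, .ex b d}, .ex c d⟩) ∨
       (∃ p q r : ℕ,
          R = ⟨{.al (atomE p) (atomE q)},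
               .al (.al (.pos q) (.pos r)) (.al (.pos p) (.pos r))⟩) ∨
       (∃ p q r : ℕ,
          R = ⟨{.al (atomE p) (atomE q)},
               .al (.ex (.pos p) (.pos r)) (.ex (.pos q) (.pos r))⟩) ∨
       (∃ p q r : ℕ,
          R = ⟨{.ex (atomE p) (atomE q)},
               .al (.al (.pos p) (.pos r)) (.ex (.pos q) (.pos r))⟩) ∨
       (∃ p q r : ℕ,
          R = ⟨{.ex (atomE q) (.ex (.pos p) (.pos r))}, .ex (atomE p) (atomE p)⟩) ∨
       (∃ (p r : ℕ) (c : ETerm), c.isPosC ∧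
          R = ⟨{.al (atomE p) (.lit (.neg p))}, .al c (.al (.pos p) (.pos r))⟩) ∨
       (∃ p r : ℕ,
          R = ⟨{.al (atomE p) (.lit (.neg p))},
               .ex (.al (.pos p) (.pos r)) (.al (.pos p) (.pos r))⟩)}

/-! ### Auxiliary notions for particular statements -/

/-- Universal S†-formulas. -/
def IsUnivSdag (φ : Formula) : Prop := ∃ l m : Lit, φ = .al (.lit l) (.lit m)

/-- Existential S†-formulas. -/
def IsExSdag (φ : Formula) : Prop := ∃ l m : Lit, φ = .ex (.lit l) (.lit m)

/-- The closure `V^Φ` of a set of unary literals: all `m` with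
`Φ ⊢_BTA ∀(l,m)` for some `l ∈ V`. -/
def litClosure (Φ : Set Formula) (V : Set Lit) : Set Lit :=
  {m | ∃ l ∈ V, Derives RuleSetBTA Φ (.al (.lit l) (.lit m))}

/-- Membership in a set of formulas, modulo the silent identification. -/
def MemMod (Γ : Set Formula) (φ : Formula) : Prop := ∃ ψ ∈ Γ, FormEquiv φ ψ

/-- The reachability relation `c ⇒ d` determined by `Γ`. -/
def Reach (Γ : Set Formula) (c d : ETerm) : Prop :=
  c = d ∨ ∃ (k : ℕ) (p : ℕ → ℕ), c = atomE (p 0) ∧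
    MemMod Γ (.al (atomE (p k)) d) ∧
    ∀ i < k, MemMod Γ (.al (atomE (p i)) (atomE (p (i + 1))))

/-- `V ⇒ d` for a set `V` of c-terms. -/
def ReachSet (Γ : Set Formula) (V : Set ETerm) (d : ETerm) : Prop :=
  ∃ c ∈ V, Reach Γ c d

/-- The witness sets `B_k`; the formal object `b_{V,i}` is encoded as the
pair `(V, i)`. -/
def BSet (Γ : Set Formula) : ℕ → Set (Set ETerm × ℕ)
  | 0 => {x | ∃ (p : ℕ) (c : ETerm), c.isC ∧ MemMod Γ (.ex (atomE p) c) ∧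
            x = ({atomE p, c}, 0)}
  | k + 1 => BSet Γ k ∪
      {x | ∃ (p i : ℕ), (i = 1 ∨ i = 2) ∧
        (∃ y ∈ BSet Γ k, ∃ t : BLit, ReachSet Γ y.1 (.ex (.pos p) t)) ∧
        x = ({atomE p}, i)}

/-- The witness set `B = ⋃_k B_k`. -/
def BAll (Γ : Set Formula) : Set (Set ETerm × ℕ) := ⋃ k, BSet Γ k

/-- Condition (C). -/
def CondC (Γ : Set Formula) : Prop :=
  ∃ (V : Set ETerm) (i : ℕ) (W : Set ETerm) (j : ℕ),
    (V, i) ∈ BAll Γ ∧ (W, j) ∈ BAll Γ ∧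
    ∃ q o r : ℕ,
      ((ReachSet Γ V (atomE q) ∧ ReachSet Γ V (.lit (.neg q))) ∨
       (ReachSet Γ V (.ex (.pos q) (.neg r)) ∧ ReachSet Γ V (.al (.pos o) (.pos r)) ∧
         Reach Γ (atomE q) (atomE o)) ∨
       (ReachSet Γ V (.al (.pos q) (.neg r)) ∧ ReachSet Γ V (.ex (.pos o) (.pos r)) ∧
         Reach Γ (atomE o) (atomE q)) ∨
       (ReachSet Γ V (.al (.pos q) (.neg r)) ∧ ReachSet Γ V (.al (.pos o) (.pos r)) ∧
         ReachSet Γ W (atomE q) ∧ ReachSet Γ W (atomE o)))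

/-- The set `Γ` of R-formulas used in the proof that `R` admits no sound
and complete direct syllogistic system (indices `0,…,n-1`). -/
def GammaSet (n : ℕ) (p : ℕ → ℕ) (r : ℕ) : Set Formula :=
  {φ | (∃ i, i + 1 < n ∧ φ = .al (atomE (p i)) (.ex (.pos (p (i + 1))) (.pos r))) ∨
       φ = .al (atomE (p 0)) (.al (.pos (p (n - 1))) (.pos r)) ∨
       (∃ q : ℕ, φ = .al (atomE q) (atomE q)) ∨
       (∃ i j, i < j ∧ j < n ∧ φ = .al (atomE (p i)) (.lit (.neg (p j))))}

/-- `Γ` is R*-complete: for every R*-formula `θ`, `θ ∈ Γ` or `θ̄ ∈ Γ`. -/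
def RstarComplete (Γ : Set Formula) : Prop :=
  ∀ θ ∈ FragRstar, θ ∈ Γ ∨ Formula.bar θ ∈ Γ

/-- Domain of the canonical structure for `Γ`: triples `(c₁,c₂,Q)` of two
positive c-terms and a quantifier (`Bool`, with `true` rendering `∃` and
`false` rendering `∀`) such that `Γ ⊩_{R*} ∃(c₁,c₂)`. -/
abbrev CanonA (Γ : Set Formula) : Type :=
  {x : ETerm × ETerm × Bool //
    x.1.isPosC ∧ x.2.1.isPosC ∧ IDerives RuleSetRstar Γ (.ex x.1 x.2.1)}

/-- The canonical structure constructed from `Γ`. -/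
def CanonInterp (Γ : Set Formula) : Interp (CanonA Γ) where
  up p := {x | IDerives RuleSetRstar Γ (.al x.val.1 (atomE p)) ∨
               IDerives RuleSetRstar Γ (.al x.val.2.1 (atomE p))}
  br r := {ab |
      (∃ c ∈ ({ab.1.val.1, ab.1.val.2.1} : Set ETerm),
       ∃ d ∈ ({ab.2.val.1, ab.2.val.2.1} : Set ETerm),
       ∃ q : ℕ,
         IDerives RuleSetRstar Γ (.al c (.al (.pos q) (.pos r))) ∧
         IDerives RuleSetRstar Γ (.al d (atomE q))) ∨
      (ab.2.val.2.2 = true ∧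
       ∃ q : ℕ, ab.2.val.1 = atomE q ∧ ab.2.val.2.1 = atomE q ∧
       ∃ c ∈ ({ab.1.val.1, ab.1.val.2.1} : Set ETerm),
         IDerives RuleSetRstar Γ (.al c (.ex (.pos q) (.pos r))))}


/-! ### The chain structures -/

/-- A point of the chain structures: a level, the set of letters (`0, 1, 2` for the families
`A, B, C`) that hold at it, and a flag telling whether it may receive edges. -/
structure Pt where
  lev : ℕ
  typ : Finset (Fin 3)
  rcv : Bool

/-- The points that carry information in the `i`-th chain structure of height `N`. Level `0` only
has points of full type, level `N` has none of type containing `B` and `C`, and full types stop at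
level `i`. All other points are isolated and satisfy no atom. -/
def Ok (N i : ℕ) (x : Pt) : Prop :=
  x.lev ≤ N ∧ (x.lev = 0 → x.typ = Finset.univ) ∧
  (x.lev = N → ¬ ((1 : Fin 3) ∈ x.typ ∧ (2 : Fin 3) ∈ x.typ)) ∧
  (x.typ = Finset.univ → x.lev ≤ i)

/-- The letter of a unary atom; its level is `p / 3`. -/
def letter (p : ℕ) : Fin 3 := ⟨p % 3, Nat.mod_lt _ (by norm_num)⟩

/-- The unary atom with a given level and letter. -/
def atm (k : ℕ) (c : Fin 3) : ℕ := 3 * k + c.val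

/-- The edges: from a level to the next one, preserving `B` and `C`, and reaching a point of full
type only from a point of full type. -/
def Edge (N i : ℕ) (x y : Pt) : Prop :=
  Ok N i x ∧ Ok N i y ∧ y.lev = x.lev + 1 ∧ y.rcv = true ∧
  x.typ.erase 0 ⊆ y.typ ∧ (y.typ = Finset.univ → x.typ = Finset.univ)

/-- The `i`-th chain structure of height `N`; all binary atoms denote the same relation. -/
def chain (N i : ℕ) : Interp Pt where
  up p := {x | Ok N i x ∧ x.lev = p / 3 ∧ letter p ∈ x.typ}
  br _ := {xy | Edge N i xy.1 xy.2}

lemma atm_div (k : ℕ) (c : Fin 3) : atm k c / 3 = k := by unfold atm; omega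

lemma letter_atm (k : ℕ) (c : Fin 3) : letter (atm k c) = c := by
  apply Fin.ext; simp only [letter, atm]; omega

lemma atm_letter (p : ℕ) : atm (p / 3) (letter p) = p := by
  simp only [letter, atm]; omega

lemma mem_atm {N i k : ℕ} {c : Fin 3} {x : Pt} :
    x ∈ (chain N i).up (atm k c) ↔ Ok N i x ∧ x.lev = k ∧ c ∈ x.typ := by
  simp [chain, atm_div, letter_atm]

lemma mem_br {N i r : ℕ} {x y : Pt} : (x, y) ∈ (chain N i).br r ↔ Edge N i x y := Iff.rfl

/-! ### Bars, swaps and the fragment -/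

lemma Lit.bar_bar (l : Lit) : l.bar.bar = l := by cases l <;> rfl

lemma BLit.bar_bar (t : BLit) : t.bar.bar = t := by cases t <;> rfl

lemma ETerm.bar_bar (e : ETerm) : e.bar.bar = e := by
  cases e <;> simp [ETerm.bar, Lit.bar_bar, BLit.bar_bar]

lemma litI_bar {A : Type} (M : Interp A) (l : Lit) : M.litI l.bar = (M.litI l)ᶜ := by
  cases l <;> simp [Lit.bar, Interp.litI]

lemma blitI_bar {A : Type} (M : Interp A) (t : BLit) : M.blitI t.bar = (M.blitI t)ᶜ := by
  cases t <;> simp [BLit.bar, Interp.blitI]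

lemma etermI_bar {A : Type} (M : Interp A) (e : ETerm) : M.etermI e.bar = (M.etermI e)ᶜ := by
  cases e with
  | lit l => exact litI_bar M l
  | ex l t => ext a; simp [ETerm.bar, Interp.etermI, blitI_bar]
  | al l t => ext a; simp [ETerm.bar, Interp.etermI, blitI_bar]

lemma sat_bar {A : Type} (M : Interp A) (φ : Formula) : M.Sat φ.bar ↔ ¬ M.Sat φ := by
  cases φ with
  | ex e f =>
    simp only [Formula.bar, Interp.Sat, etermI_bar, Set.not_nonempty_iff_eq_empty]
    rw [Set.subset_compl_iff_disjoint_right, Set.disjoint_iff_inter_eq_empty]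
  | al e f =>
    simp only [Formula.bar, Interp.Sat, etermI_bar, Set.not_subset]
    rfl

lemma sat_swap {A : Type} (M : Interp A) (φ : Formula) : M.Sat φ.swap ↔ M.Sat φ := by
  cases φ with
  | ex e f => simp only [Formula.swap, Interp.Sat, Set.inter_comm]
  | al e f => simp only [Formula.swap, Interp.Sat, etermI_bar, Set.compl_subset_compl]

lemma swap_swap (φ : Formula) : φ.swap.swap = φ := by
  cases φ <;> simp [Formula.swap, ETerm.bar_bar]

lemma frag_swap {φ : Formula} (h : φ ∈ FragRdag) : φ.swap ∈ FragRdag := by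
  obtain ⟨l, e, rfl | rfl | rfl | rfl⟩ := h
  · exact ⟨l, e, by simp [Formula.swap]⟩
  · exact ⟨l, e, by simp [Formula.swap]⟩
  · exact ⟨l.bar, e.bar, by simp [Formula.swap, ETerm.bar]⟩
  · exact ⟨l.bar, e.bar, by simp [Formula.swap, ETerm.bar]⟩

lemma frag_bar {φ : Formula} (h : φ ∈ FragRdag) : φ.bar ∈ FragRdag := by
  obtain ⟨l, e, rfl | rfl | rfl | rfl⟩ := h
  · exact ⟨l, e.bar, by simp [Formula.bar]⟩
  · exact ⟨l.bar, e, by simp [Formula.bar, ETerm.bar]⟩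
  · exact ⟨l, e.bar, by simp [Formula.bar]⟩
  · exact ⟨l.bar, e, by simp [Formula.bar, ETerm.bar]⟩

lemma frag_subst {φ : Formula} (g : Subst) (h : φ ∈ FragRdag) : φ.subst g ∈ FragRdag := by
  obtain ⟨l, e, rfl | rfl | rfl | rfl⟩ := h <;>
    exact ⟨l.subst g, e.subst g, by simp [Formula.subst, ETerm.subst]⟩

lemma formEquiv_frag {φ ψ : Formula} (h : FormEquiv φ ψ) : ψ ∈ FragRdag ↔ φ ∈ FragRdag := by
  rcases h with rfl | rfl
  · rfl
  · exact ⟨fun h => swap_swap φ ▸ frag_swap h, frag_swap⟩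

lemma formEquiv_sat {A : Type} (M : Interp A) {φ ψ : Formula} (h : FormEquiv φ ψ) :
    M.Sat ψ ↔ M.Sat φ := by
  rcases h with rfl | rfl
  · rfl
  · exact sat_swap M φ

lemma not_sat_absurd {A : Type} (M : Interp A) {b : Formula} (h : IsAbsurd b) : ¬ M.Sat b := by
  obtain ⟨e, rfl⟩ := h
  simp [Interp.Sat, etermI_bar]

/-! ### Comparing the chain structures -/

/-- The points whose role may change with `i`. -/
def Special (x : Pt) : Prop := x.typ = Finset.univ ∧ 1 ≤ x.lev

lemma ok_congr {N i i' : ℕ} {x : Pt} (h : x.typ = Finset.univ → (x.lev ≤ i ↔ x.lev ≤ i')) :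
    Ok N i x ↔ Ok N i' x := by
  unfold Ok; tauto

lemma ok_of_not_special {N i i' : ℕ} {x : Pt} (hx : ¬ Special x) : Ok N i x ↔ Ok N i' x := by
  apply ok_congr
  intro h
  have : ¬ 1 ≤ x.lev := fun h' => hx ⟨h, h'⟩
  omega

lemma litI_congr {N i i' : ℕ} {x : Pt} (h : Ok N i x ↔ Ok N i' x) (l : Lit) :
    x ∈ (chain N i).litI l ↔ x ∈ (chain N i').litI l := by
  cases l <;> simp [Interp.litI, chain, h]

/-- If a literal is satisfied at all then it is satisfied at a point that receives no edge, and
whether this happens does not depend on `i`. -/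
lemma lit_nonrcv {N i i' : ℕ} (hN : 1 ≤ N) {l : Lit} {x : Pt} (h : x ∈ (chain N i).litI l) :
    ∃ y ∈ (chain N i').litI l, y.rcv = false := by
  cases l with
  | pos p =>
    obtain ⟨hok, hlev, hmem⟩ := h
    rcases Nat.eq_zero_or_pos x.lev with h0 | h0
    · refine ⟨⟨x.lev, Finset.univ, false⟩, ⟨?_, hlev, Finset.mem_univ _⟩, rfl⟩
      refine ⟨hok.1, fun _ => rfl, ?_, fun _ => by simp [h0]⟩
      simp only; omega
    · refine ⟨⟨x.lev, {letter p}, false⟩, ⟨?_, hlev, by simp⟩, rfl⟩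
      have h1 : ∀ c : Fin 3, ({c} : Finset (Fin 3)) ≠ Finset.univ := by decide
      have h2 : ∀ c : Fin 3, ¬ (1 ∈ ({c} : Finset (Fin 3)) ∧ 2 ∈ ({c} : Finset (Fin 3))) := by
        decide
      exact ⟨hok.1, fun h => by simp only at h; omega, fun _ => h2 _, fun h => absurd h (h1 _)⟩
  | neg p =>
    refine ⟨⟨N + 1, ∅, false⟩, fun h => ?_, rfl⟩
    have := h.1.1
    simp at this

/-- The terms `∃(m, r̄)` denote everything or nothing, independently of `i`. -/
lemma ex_neg_congr {N i i' r : ℕ} (hN : 1 ≤ N) {m : Lit} {x x' : Pt}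
    (h : x ∈ (chain N i).etermI (.ex m (.neg r))) :
    x' ∈ (chain N i').etermI (.ex m (.neg r)) := by
  obtain ⟨y, hy, -⟩ := h
  obtain ⟨z, hz, hr⟩ := lit_nonrcv (i' := i') hN hy
  refine ⟨z, hz, fun h => ?_⟩
  have := (mem_br.1 h).2.2.2.1
  simp [hr] at this

/-- Two points agree on all e-terms as soon as they agree on the literals and on the
terms `∃(m, r)`. -/
lemma eterm_congr {N i i' : ℕ} (hN : 1 ≤ N) {x x' : Pt}
    (hl : ∀ l, x ∈ (chain N i).litI l ↔ x' ∈ (chain N i').litI l)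
    (he : ∀ m r, x ∈ (chain N i).etermI (.ex m (.pos r)) ↔
      x' ∈ (chain N i').etermI (.ex m (.pos r))) (e : ETerm) :
    x ∈ (chain N i).etermI e ↔ x' ∈ (chain N i').etermI e := by
  have hex : ∀ m t, x ∈ (chain N i).etermI (.ex m t) ↔ x' ∈ (chain N i').etermI (.ex m t) := by
    rintro m (r | r)
    · exact he m r
    · exact ⟨ex_neg_congr hN, ex_neg_congr hN⟩
  cases e with
  | lit l => exact hl l
  | ex m t => exact hex m t
  | al m t =>
    have := hex m t.bar
    have h2 : ETerm.al m t = (ETerm.ex m t.bar).bar := by simp [ETerm.bar, BLit.bar_bar]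
    rw [h2, etermI_bar, etermI_bar, Set.mem_compl_iff, Set.mem_compl_iff, this]

lemma ex_pos_mono {N i i' r : ℕ} (hi' : 1 ≤ i') (hi : 1 ≤ i) {x : Pt} (hx : ¬ Special x) {m : Lit}
    (h : x ∈ (chain N i).etermI (.ex m (.pos r))) :
    x ∈ (chain N i').etermI (.ex m (.pos r)) := by
  obtain ⟨y, hy, hxy⟩ := h
  obtain ⟨hx1, hy1, hlev, hr, hsub, hfull⟩ := mem_br.1 hxy
  have hyok : Ok N i y ↔ Ok N i' y := by
    apply ok_congr
    intro hyf
    have : ¬ 1 ≤ x.lev := fun h' => hx ⟨hfull hyf, h'⟩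
    omega
  exact ⟨y, (litI_congr hyok m).1 hy,
    mem_br.2 ⟨(ok_of_not_special hx).1 hx1, hyok.1 hy1, hlev, hr, hsub, hfull⟩⟩

lemma eterm_not_special {N i i' : ℕ} (hN : 1 ≤ N) (hi : 1 ≤ i) (hi' : 1 ≤ i') {x : Pt}
    (hx : ¬ Special x) (e : ETerm) :
    x ∈ (chain N i).etermI e ↔ x ∈ (chain N i').etermI e :=
  eterm_congr hN (litI_congr (ok_of_not_special hx))
    (fun _ _ => ⟨ex_pos_mono hi' hi hx, ex_pos_mono hi hi' hx⟩) e

lemma eterm_not_ok {N i : ℕ} (hN : 1 ≤ N) {x x' : Pt} (hx : ¬ Ok N i x) (hx' : ¬ Ok N i x')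
    (e : ETerm) : x ∈ (chain N i).etermI e ↔ x' ∈ (chain N i).etermI e := by
  refine eterm_congr hN ?_ ?_ e
  · rintro (p | p) <;> simp [Interp.litI, chain, hx, hx']
  · intro m r
    refine ⟨?_, ?_⟩
    · rintro ⟨y, -, hy⟩
      exact absurd (mem_br.1 hy).1 hx
    · rintro ⟨y, -, hy⟩
      exact (hx' (mem_br.1 hy).1).elim

/-- A literal true at a point of full type only uses one letter of that type; the letter `A` is
needed only by the atom `A` itself. -/
lemma lit_full {N i : ℕ} {x : Pt} (hx : x.typ = Finset.univ) (hok : Ok N i x) {l : Lit}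
    (hl : x ∈ (chain N i).litI l) :
    ∃ c : Fin 3, (c = 0 → l = .pos (atm x.lev 0)) ∧
      ∀ y, Ok N i y → y.lev = x.lev → c ∈ y.typ → y ∈ (chain N i).litI l := by
  cases l with
  | pos p =>
    refine ⟨letter p, fun h => ?_, fun y hy hlev hc => ⟨hy, hlev.trans hl.2.1, hc⟩⟩
    rw [hl.2.1, ← h, atm_letter]
  | neg p =>
    refine ⟨1, fun h => absurd h (by decide), fun y hy hlev hc h => hl ⟨hok, ?_, ?_⟩⟩
    · rw [← hlev]; exact h.2.1
    · rw [hx]; exact Finset.mem_univ _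

lemma ok_mid {N i j : ℕ} {S : Finset (Fin 3)} {b : Bool} (hj : 1 ≤ j) (hjN : j < N)
    (hS : S ≠ Finset.univ) : Ok N i ⟨j, S, b⟩ :=
  ⟨hjN.le, fun h => by simp only at h; omega, fun h => by simp only at h; omega,
    fun h => absurd h hS⟩

lemma pair_ne_univ : ∀ c d : Fin 3, ({c, d} : Finset (Fin 3)) ≠ Finset.univ := by decide

lemma single_ne_univ : ∀ c : Fin 3, ({c} : Finset (Fin 3)) ≠ Finset.univ := by decide

/-- The exceptional pair: `∃(l, e)` is `∃(A_i, ∀(A_{i+1}, r̄))`. -/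
def Exc (i : ℕ) (l : Lit) (e : ETerm) : Prop :=
  l = .pos (atm i 0) ∧ ∃ r, e = .al (.pos (atm (i + 1) 0)) (.neg r)

/-- Outside the exceptional pair, points of full type can be replaced as witnesses by points
whose role does not depend on `i`. -/
lemma witness {N i : ℕ} (hiN : i + 2 ≤ N) {l : Lit} {e : ETerm}
    (h : ((chain N i).litI l ∩ (chain N i).etermI e).Nonempty) :
    (∃ y, ¬ Special y ∧ y ∈ (chain N i).litI l ∧ y ∈ (chain N i).etermI e) ∨ Exc i l e := by
  obtain ⟨x, hxl, hxe⟩ := h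
  have hN : 1 ≤ N := by omega
  by_cases hsp : Special x
  swap
  · exact .inl ⟨x, hsp, hxl, hxe⟩
  by_cases hok : Ok N i x
  swap
  · have ht : ¬ Ok N i ⟨N + 1, ∅, false⟩ := fun h => by have := h.1; simp at this
    exact .inl ⟨⟨N + 1, ∅, false⟩, fun h => absurd h.1 (by simp only; decide),
      (eterm_not_ok hN hok ht (.lit l)).1 hxl, (eterm_not_ok hN hok ht e).1 hxe⟩
  obtain ⟨hfull, hj⟩ := hsp
  have hji : x.lev ≤ i := hok.2.2.2 hfull
  obtain ⟨c, hc0, hc⟩ := lit_full hfull hok hxl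
  -- A point at the level of `x` whose type is not full and contains `c` is a candidate witness.
  have cand : ∀ S : Finset (Fin 3), c ∈ S → S ≠ Finset.univ →
      (⟨x.lev, S, true⟩ : Pt) ∈ (chain N i).etermI e →
      (∃ y, ¬ Special y ∧ y ∈ (chain N i).litI l ∧ y ∈ (chain N i).etermI e) ∨ Exc i l e := by
    intro S hcS hS he
    exact .inl ⟨_, fun h => hS h.1, hc _ (ok_mid hj (by omega) hS) rfl hcS, he⟩
  cases e with
  | lit m =>
    obtain ⟨d, -, hd⟩ := lit_full hfull hok hxe
    exact cand {c, d} (by simp) (pair_ne_univ c d)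
      (hd _ (ok_mid hj (by omega) (pair_ne_univ c d)) rfl (by simp))
  | ex m t =>
    cases t with
    | neg r => exact cand {c} (by simp) (single_ne_univ c) (ex_neg_congr hN hxe)
    | pos r =>
      apply cand {c} (by simp) (single_ne_univ c)
      obtain ⟨y, hym, hxy⟩ := hxe
      obtain ⟨-, hyok, hlev, hr, hsub, -⟩ := mem_br.1 hxy
      have hz : Ok N i ⟨x.lev, {c}, true⟩ := ok_mid hj (by omega) (single_ne_univ c)
      by_cases hyf : y.typ = Finset.univ
      · obtain ⟨d, -, hd⟩ := lit_full hyf hyok hym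
        have hy' : Ok N i ⟨y.lev, {c, d}, true⟩ :=
          ok_mid (by omega) (by omega) (pair_ne_univ c d)
        refine ⟨⟨y.lev, {c, d}, true⟩, hd _ hy' rfl (by simp), mem_br.2 ⟨hz, hy', hlev, rfl, ?_, ?_⟩⟩
        · exact (Finset.erase_subset _ _).trans (by simp)
        · exact fun h => absurd h (pair_ne_univ c d)
      · refine ⟨y, hym, mem_br.2 ⟨hz, hyok, hlev, hr, ?_, fun h => absurd h hyf⟩⟩
        refine (Finset.erase_subset_erase 0 ?_).trans hsub
        rw [hfull]; exact Finset.subset_univ _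
  | al m t =>
    cases t with
    | pos r =>
      apply cand {c} (by simp) (single_ne_univ c)
      intro b hb
      by_contra hcon
      obtain ⟨b', hb', hn⟩ := ex_neg_congr (i' := i) (x' := x) hN ⟨b, hb, hcon⟩
      exact hn (hxe b' hb')
    | neg r =>
      -- `x` has an edge to the point of type `{B, C}` on the next level, so `m` fails there.
      have hbc : Ok N i ⟨x.lev + 1, {1, 2}, true⟩ :=
        ok_mid (by omega) (by omega) (pair_ne_univ 1 2)
      have hm : (⟨x.lev + 1, {1, 2}, true⟩ : Pt) ∉ (chain N i).litI m := by
        intro hm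
        refine hxe _ hm (mem_br.2 ⟨hok, hbc, rfl, rfl, ?_, fun _ => hfull⟩)
        rw [hfull]
        exact (by decide : (Finset.univ : Finset (Fin 3)).erase 0 ⊆ {1, 2})
      cases m with
      | neg q =>
        have hq : (⟨x.lev + 1, {1, 2}, true⟩ : Pt) ∈ (chain N i).up q := not_not.1 hm
        apply cand {c, letter q} (by simp) (pair_ne_univ _ _)
        intro y hy hxy
        obtain ⟨-, hyok, hlev, -, hsub, -⟩ := mem_br.1 hxy
        refine hy ⟨hyok, hlev.trans hq.2.1, hsub ?_⟩
        have h12 := hq.2.2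
        simp only [Finset.mem_erase, Finset.mem_insert, Finset.mem_singleton, or_true, and_true]
        intro h0
        rw [h0] at h12
        exact absurd h12 (by decide : (0 : Fin 3) ∉ ({1, 2} : Finset (Fin 3)))
      | pos q =>
        by_cases hq : q / 3 = x.lev + 1
        swap
        · apply cand {c} (by simp) (single_ne_univ c)
          intro y hy hxy
          exact hq (hy.2.1.symm.trans (mem_br.1 hxy).2.2.1)
        have hq0 : letter q = 0 := by
          have h12 : letter q ∉ ({1, 2} : Finset (Fin 3)) := fun h => hm ⟨hbc, hq.symm, h⟩
          revert h12
          generalize letter q = d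
          revert d; decide
        by_cases hc' : c = 0
        · have hqe : q = atm (x.lev + 1) 0 := by rw [← hq, ← hq0, atm_letter]
          rcases hji.eq_or_lt with hji | hji
          · right
            rw [← hji]
            exact ⟨hc0 hc', r, by rw [hqe]⟩
          · exfalso
            have hy : Ok N i ⟨x.lev + 1, Finset.univ, true⟩ :=
              ⟨by simp only; omega, fun _ => rfl, fun h => by simp only at h; omega,
                fun _ => hji⟩
            refine hxe ⟨x.lev + 1, Finset.univ, true⟩ ⟨hy, hq.symm, Finset.mem_univ _⟩
              (mem_br.2 ⟨hok, hy, rfl, rfl, Finset.subset_univ _, fun _ => hfull⟩)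
        · apply cand {1, 2} (by revert hc'; generalize c = d; revert d; decide) (pair_ne_univ _ _)
          intro y hy hxy
          obtain ⟨-, -, -, -, hsub, hf⟩ := mem_br.1 hxy
          have h0 := hy.2.2
          rw [hq0] at h0
          have key : ∀ T : Finset (Fin 3), ({1, 2} : Finset (Fin 3)).erase 0 ⊆ T → 0 ∈ T →
              T = Finset.univ := by decide
          exact pair_ne_univ _ _ (hf (key _ hsub h0))

/-- Every existential formula with a literal has the same truth value in all chain structures but
at most one. -/
lemma const_ex (N : ℕ) (l : Lit) (e : ETerm) : ∃ i₀, ∀ i i', 1 ≤ i → i + 2 ≤ N → i ≠ i₀ →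
    1 ≤ i' → i' + 2 ≤ N → i' ≠ i₀ →
    (((chain N i).litI l ∩ (chain N i).etermI e).Nonempty ↔
      ((chain N i').litI l ∩ (chain N i').etermI e).Nonempty) := by
  have main : ∃ i₀, ∀ i, Exc i l e → i = i₀ := by
    by_cases h : ∃ i, Exc i l e
    · obtain ⟨i₀, h₀, -⟩ := h
      refine ⟨i₀, fun i hi => ?_⟩
      have := hi.1.symm.trans h₀
      simp only [Lit.pos.injEq] at this
      rw [← atm_div i 0, this, atm_div]
    · exact ⟨0, fun i hi => absurd ⟨i, hi⟩ h⟩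
  obtain ⟨i₀, h₀⟩ := main
  have one : ∀ i i', 1 ≤ i → i + 2 ≤ N → i ≠ i₀ → 1 ≤ i' →
      ((chain N i).litI l ∩ (chain N i).etermI e).Nonempty →
      ((chain N i').litI l ∩ (chain N i').etermI e).Nonempty := by
    intro i i' h1 h2 h3 h1' h
    rcases witness h2 h with ⟨y, hy, hyl, hye⟩ | hexc
    · exact ⟨y, (eterm_not_special (by omega) h1 h1' hy (.lit l)).1 hyl,
        (eterm_not_special (by omega) h1 h1' hy e).1 hye⟩
    · exact absurd (h₀ i hexc) h3
  refine ⟨i₀, fun i i' h1 h2 h3 h4 h5 h6 => ?_⟩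
  exact ⟨one i i' h1 h2 h3 h4, one i' i h4 h5 h6 h1⟩

/-- Every `R†`-formula has the same truth value in all chain structures but at most one. -/
lemma const_sat (N : ℕ) {φ : Formula} (hφ : φ ∈ FragRdag) : ∃ i₀, ∀ i i', 1 ≤ i → i + 2 ≤ N →
    i ≠ i₀ → 1 ≤ i' → i' + 2 ≤ N → i' ≠ i₀ → ((chain N i).Sat φ ↔ (chain N i').Sat φ) := by
  have hex : ∀ l e, ∃ i₀, ∀ i i', 1 ≤ i → i + 2 ≤ N → i ≠ i₀ → 1 ≤ i' → i' + 2 ≤ N → i' ≠ i₀ →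
      ((chain N i).Sat (.ex (.lit l) e) ↔ (chain N i').Sat (.ex (.lit l) e)) :=
    fun l e => const_ex N l e
  have hswap : ∀ ψ : Formula, (∃ i₀, ∀ i i', 1 ≤ i → i + 2 ≤ N → i ≠ i₀ → 1 ≤ i' → i' + 2 ≤ N →
      i' ≠ i₀ → ((chain N i).Sat ψ ↔ (chain N i').Sat ψ)) → ∃ i₀, ∀ i i', 1 ≤ i → i + 2 ≤ N →
      i ≠ i₀ → 1 ≤ i' → i' + 2 ≤ N → i' ≠ i₀ →
      ((chain N i).Sat ψ.swap ↔ (chain N i').Sat ψ.swap) := by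
    intro ψ h
    simpa only [sat_swap] using h
  have hbar : ∀ l e, ∃ i₀, ∀ i i', 1 ≤ i → i + 2 ≤ N → i ≠ i₀ → 1 ≤ i' → i' + 2 ≤ N → i' ≠ i₀ →
      ((chain N i).Sat (.al (.lit l) e) ↔ (chain N i').Sat (.al (.lit l) e)) := by
    intro l e
    obtain ⟨i₀, h⟩ := hex l e.bar
    refine ⟨i₀, fun i i' h1 h2 h3 h4 h5 h6 => ?_⟩
    have h' := h i i' h1 h2 h3 h4 h5 h6
    have hb : Formula.ex (.lit l) e.bar = (Formula.al (.lit l) e).bar := rfl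
    rw [hb, sat_bar, sat_bar] at h'
    exact not_iff_not.1 h'
  obtain ⟨l, e, rfl | rfl | rfl | rfl⟩ := hφ
  · exact hex l e
  · exact hswap _ (hex l e)
  · exact hbar l e
  · have := hswap _ (hbar l.bar e.bar)
    have heq : (Formula.al (.lit l.bar) e.bar).swap = .al e (.lit l) :=
      congrArg₂ Formula.al (ETerm.bar_bar e) (ETerm.bar_bar (.lit l))
    rwa [heq] at this

/-! ### The limit theory and its unsatisfiability -/

/-- The formulas true in all chain structures of height `N` with at most one exception. -/
def Almost (N : ℕ) (φ : Formula) : Prop :=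
  ∃ i₀, ∀ i, 1 ≤ i → i + 2 ≤ N → i ≠ i₀ → (chain N i).Sat φ

/-- The `R†`-formulas true in all chain structures of height `N` with at most one exception. -/
def Lim (N : ℕ) : Set Formula := {φ | φ ∈ FragRdag ∧ Almost N φ}

lemma almost_or_bar (N : ℕ) {φ : Formula} (hφ : φ ∈ FragRdag) : Almost N φ ∨ Almost N φ.bar := by
  obtain ⟨i₀, h⟩ := const_sat N hφ
  by_cases hA : ∀ i, 1 ≤ i → i + 2 ≤ N → i ≠ i₀ → (chain N i).Sat φ
  · exact .inl ⟨i₀, hA⟩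
  · push Not at hA
    obtain ⟨i, h1, h2, h3, h4⟩ := hA
    exact .inr ⟨i₀, fun i' h1' h2' h3' =>
      (sat_bar _ _).2 fun hs => h4 ((h i i' h1 h2 h3 h1' h2' h3').2 hs)⟩

lemma almost_step (N : ℕ) {j : ℕ} (hj : j < N) :
    Almost N (.al (.lit (.pos (atm j 0))) (.ex (.pos (atm (j + 1) 0)) (.pos 0))) := by
  refine ⟨j, fun i hi hiN hij x hx => ?_⟩
  obtain ⟨hok, hlev, h0⟩ := mem_atm.1 hx
  have : Ok N i ⟨x.lev + 1, x.typ, true⟩ := by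
    refine ⟨by simp only; omega, fun h => by simp only at h; omega, fun h h12 => ?_, fun h => ?_⟩
    · have key : ∀ T : Finset (Fin 3), 0 ∈ T → 1 ∈ T ∧ 2 ∈ T → T = Finset.univ := by decide
      have := hok.2.2.2 (key _ h0 h12)
      simp only at h
      omega
    · have := hok.2.2.2 h
      simp only
      omega
  exact ⟨⟨x.lev + 1, x.typ, true⟩, mem_atm.2 ⟨this, by simp only; omega, h0⟩,
    mem_br.2 ⟨hok, this, rfl, rfl, Finset.erase_subset _ _, id⟩⟩

lemma almost_keep (N : ℕ) {j : ℕ} {c : Fin 3} (hc : c ≠ 0) :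
    Almost N (.al (.lit (.pos (atm j c))) (.al (.neg (atm (j + 1) c)) (.neg 0))) := by
  refine ⟨0, fun i hi hiN hij x hx y hy hxy => ?_⟩
  obtain ⟨hok, hlev, h0⟩ := mem_atm.1 hx
  obtain ⟨-, hyok, hlev', -, hsub, -⟩ := mem_br.1 hxy
  exact hy (mem_atm.2 ⟨hyok, by omega, hsub (Finset.mem_erase.2 ⟨hc, h0⟩)⟩)

lemma almost_start (N : ℕ) (c : Fin 3) :
    Almost N (.al (.lit (.pos (atm 0 0))) (.lit (.pos (atm 0 c)))) := by
  refine ⟨0, fun i hi hiN hij x hx => ?_⟩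
  obtain ⟨hok, hlev, h0⟩ := mem_atm.1 hx
  exact mem_atm.2 ⟨hok, hlev, by rw [hok.2.1 hlev]; exact Finset.mem_univ _⟩

lemma almost_nonempty (N : ℕ) :
    Almost N (.ex (.lit (.pos (atm 0 0))) (.lit (.pos (atm 0 0)))) := by
  refine ⟨0, fun i hi hiN hij => ?_⟩
  have h : (⟨0, Finset.univ, true⟩ : Pt) ∈ (chain N i).up (atm 0 0) :=
    mem_atm.2 ⟨⟨by simp, fun _ => rfl, fun h => by simp only at h; omega, fun _ => by simp⟩,
      rfl, Finset.mem_univ _⟩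
  exact ⟨_, h, h⟩

lemma almost_end (N : ℕ) :
    Almost N (.al (.lit (.pos (atm N 1))) (.lit (.neg (atm N 2)))) := by
  refine ⟨0, fun i hi hiN hij x hx hxC => ?_⟩
  obtain ⟨hok, hlev, h1⟩ := mem_atm.1 hx
  exact hok.2.2.1 hlev ⟨h1, (mem_atm.1 hxC).2.2⟩

/-- In a model of the limit theory, `A_j ∩ B_j ∩ C_j` is nonempty for all `j ≤ N`, which is
impossible for `j = N`. -/
lemma lim_unsat (N : ℕ) {W : Type} (M : Interp W) : ¬ M.SatSet (Lim N) := by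
  intro hM
  have step : ∀ j ≤ N, ∃ w, ∀ c : Fin 3, w ∈ M.up (atm j c) := by
    intro j
    induction j with
    | zero =>
      intro _
      obtain ⟨w, hw, -⟩ := hM _ ⟨⟨_, _, .inl rfl⟩, almost_nonempty N⟩
      exact ⟨w, fun c => hM _ ⟨⟨_, _, .inr (.inr (.inl rfl))⟩, almost_start N c⟩ hw⟩
    | succ j ih =>
      intro hj
      obtain ⟨w, hw⟩ := ih (by omega)
      obtain ⟨v, hv, hwv⟩ :=
        hM _ ⟨⟨_, _, .inr (.inr (.inl rfl))⟩, almost_step N (by omega : j < N)⟩ (hw 0)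
      refine ⟨v, fun c => ?_⟩
      by_cases hc : c = 0
      · rw [hc]; exact hv
      · by_contra hn
        exact hM _ ⟨⟨_, _, .inr (.inr (.inl rfl))⟩, almost_keep N (j := j) hc⟩ (hw c) v hn hwv
  obtain ⟨w, hw⟩ := step N le_rfl
  exact hM _ ⟨⟨_, _, .inr (.inr (.inl rfl))⟩, almost_end N⟩ (hw 1) (hw 2)

/-! ### Closure of the limit theory under indirect derivations -/

/-- If `N` exceeds the number of formulas by a margin, finitely many formulas of the limit theory
hold simultaneously in some chain structure. -/
lemma common_index {N : ℕ} (Δ : Finset Formula) (hΔ : Δ.card + 3 ≤ N)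
    (h : ∀ ψ ∈ Δ, Almost N ψ) : ∃ i, ∀ ψ ∈ Δ, (chain N i).Sat ψ := by
  classical
  choose! f hf using h
  obtain ⟨i, hi, hi'⟩ : ∃ i ∈ Finset.Icc 1 (N - 2), i ∉ Δ.image f := by
    apply Finset.exists_mem_notMem_of_card_lt_card
    have := Finset.card_image_le (s := Δ) (f := f)
    simp only [Nat.card_Icc]
    omega
  rw [Finset.mem_Icc] at hi
  exact ⟨i, fun ψ hψ => hf ψ hψ i hi.1 (by omega)
    fun h => hi' (Finset.mem_image.2 ⟨ψ, hψ, h.symm⟩)⟩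

/-- The limit theory, completed outside the fragment `R†` by the theory of one chain structure:
reductio may be applied to formulas outside the fragment. -/
def LimAll (N : ℕ) (φ : Formula) : Prop :=
  (φ ∈ FragRdag ∧ Almost N φ) ∨ (φ ∉ FragRdag ∧ (chain N 1).Sat φ)

lemma limAll_or_bar (N : ℕ) (φ : Formula) : LimAll N φ ∨ LimAll N φ.bar := by
  by_cases hφ : φ ∈ FragRdag
  · exact (almost_or_bar N hφ).imp (fun h => .inl ⟨hφ, h⟩) (fun h => .inl ⟨frag_bar hφ, h⟩)
  · by_cases hs : (chain N 1).Sat φ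
    · exact .inl (.inr ⟨hφ, hs⟩)
    · by_cases hb : φ.bar ∈ FragRdag
      · exfalso
        have h := frag_bar hb
        cases φ <;> simp only [Formula.bar, ETerm.bar_bar] at h <;> exact hφ h
      · exact .inr (.inr ⟨hb, (sat_bar _ _).2 hs⟩)

lemma not_limAll_absurd {N : ℕ} (hN : 4 ≤ N) {b : Formula} (hb : IsAbsurd b) : ¬ LimAll N b := by
  rintro (⟨-, h⟩ | ⟨-, h⟩)
  · obtain ⟨i, hi⟩ := common_index {b} (by simpa using hN) (by simpa using h)
    exact not_sat_absurd _ hb (hi b (by simp))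
  · exact not_sat_absurd _ hb h

lemma limAll_of_derives {X : Set SylRule} (hX : ∀ R ∈ X, RuleIn FragRdag R)
    (hsound : SoundFor FragRdag (IDerives X)) {N : ℕ} (hN : ∀ R ∈ X, R.ants.card + 4 ≤ N)
    (hN4 : 4 ≤ N) {Θ : Set Formula} {θ : Formula} (h : IDerives X Θ θ) :
    (∀ ψ ∈ Θ, LimAll N ψ) → LimAll N θ := by
  induction h with
  | mem h => exact fun hΘ => hΘ _ h
  | @rule Θ R g hR _ ih =>
    intro hΘ
    have hcon : R.con.subst g ∈ FragRdag := frag_subst g (hX R hR).2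
    rcases almost_or_bar N hcon with h | h
    · exact .inl ⟨hcon, h⟩
    exfalso
    have hants : ∀ ψ ∈ R.ants.image (Formula.subst g), ψ ∈ FragRdag ∧ Almost N ψ := by
      intro ψ hψ
      obtain ⟨ψ', hψ', rfl⟩ := Finset.mem_image.1 hψ
      rcases ih ψ' hψ' hΘ with h | h
      · exact h
      · exact absurd (frag_subst g ((hX R hR).1 ψ' hψ')) h.1
    have hent : Entails (↑(R.ants.image (Formula.subst g))) (R.con.subst g) := by
      refine hsound _ _ (fun ψ hψ => (hants ψ hψ).1) hcon (.rule R g hR fun ψ hψ => .mem ?_)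
      exact Finset.mem_coe.2 (Finset.mem_image_of_mem _ hψ)
    obtain ⟨i, hi⟩ := common_index (N := N)
      (insert (R.con.subst g).bar (R.ants.image (Formula.subst g)))
      (by
        have h1 := Finset.card_insert_le (R.con.subst g).bar (R.ants.image (Formula.subst g))
        have h2 := Finset.card_image_le (s := R.ants) (f := Formula.subst g)
        have h3 := hN R hR
        omega)
      (by
        intro ψ hψ
        rcases Finset.mem_insert.1 hψ with rfl | hψ
        · exact h
        · exact (hants ψ hψ).2)
    refine (sat_bar _ _).1 (hi _ (Finset.mem_insert_self _ _)) ?_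
    exact hent Pt ⟨⟨0, ∅, true⟩⟩ _ fun ψ hψ =>
      hi ψ (Finset.mem_insert_of_mem (Finset.mem_coe.1 hψ))
  | ident _ heq ih =>
    intro hΘ
    rcases ih hΘ with ⟨h1, i₀, h2⟩ | ⟨h1, h2⟩
    · exact .inl ⟨(formEquiv_frag heq).2 h1, i₀, fun i a b c =>
        (formEquiv_sat _ heq).2 (h2 i a b c)⟩
    · exact .inr ⟨fun h => h1 ((formEquiv_frag heq).1 h), (formEquiv_sat _ heq).2 h2⟩
  | @raa Θ θ b hb _ ih =>
    intro hΘ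
    refine (limAll_or_bar N θ).resolve_right fun h => not_limAll_absurd hN4 hb (ih ?_)
    rintro ψ (hψ | rfl)
    · exact hΘ ψ hψ
    · exact h

/-- there is no finite set of syllogistic rules in `R†` whose
indirect derivation relation is both sound and complete for `R†`. -/
theorem no_sound_complete_indirect_system_for_Rdag :
    ¬ ∃ X : Set SylRule, X.Finite ∧ (∀ R ∈ X, RuleIn FragRdag R) ∧
        SoundFor FragRdag (IDerives X) ∧ CompleteFor FragRdag (IDerives X) := by
  rintro ⟨X, hfin, hX, hsound, hcomp⟩
  obtain ⟨K, hK⟩ := (hfin.image fun R : SylRule => R.ants.card).bddAbove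
  have hN : ∀ R ∈ X, R.ants.card + 4 ≤ K + 4 := fun R hR =>
    Nat.add_le_add_right (hK (Set.mem_image_of_mem _ hR)) 4
  have hb : IsAbsurd (.ex (.lit (.pos 0)) (.lit (.neg 0))) := ⟨.lit (.pos 0), rfl⟩
  refine not_limAll_absurd (N := K + 4) (by omega) hb
    (limAll_of_derives hX hsound hN (by omega)
      (hcomp (Lim (K + 4)) _ (fun φ hφ => hφ.1) ⟨_, _, .inl rfl⟩ ?_) fun ψ hψ => .inl hψ)
  exact fun W _ M hM => absurd hM (lim_unsat _ M)

end Syllogistic
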